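/- arXiv:2401.10248 — 4 statements merged into one kernel-verified Lean document; each statement's English description precedes it below -/
import Mathlib

section
/- Let d > 0 and let p₁, p₂, p₃, p₄ be four points in the Euclidean plane ℝ² whose pairwise distances are all at least d. Then the number of unordered pairs {i,j} with dist(pᵢ,pⱼ) = d is at most 5. -/
/-- Four points of the plane cannot be pairwise at the same positive distance
(the Gram determinant of three plane vectors vanishes). -/
lemma gram_aux (D a b c e f g : ℝ) (hD : 0 < D)
    (h1 : a ^ 2 + b ^ 2 = D) (h2 : c ^ 2 + e ^ 2 = D) (h3 : f ^ 2 + g ^ 2 = D)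
    (h4 : a * c + b * e = D / 2) (h5 : a * f + b * g = D / 2)
    (h6 : c * f + e * g = D / 2) : False := by
  have key : (a ^ 2 + b ^ 2) * ((c ^ 2 + e ^ 2) * (f ^ 2 + g ^ 2) - (c * f + e * g) ^ 2)
      - (a * c + b * e) * ((a * c + b * e) * (f ^ 2 + g ^ 2) - (c * f + e * g) * (a * f + b * g))
      + (a * f + b * g) * ((a * c + b * e) * (c * f + e * g)
        - (c ^ 2 + e ^ 2) * (a * f + b * g)) = 0 := by ring
  rw [h1, h2, h3, h4, h5, h6] at key
  have : 0 < D ^ 3 := by positivity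
  nlinarith

/-- Four points in the Euclidean plane with pairwise distances at least `d > 0`
have at most 5 unordered pairs at distance exactly `d`. -/
theorem four_points_at_most_five_pairs_at_min_distance
    (d : ℝ) (hd : 0 < d) (p : Fin 4 → EuclideanSpace ℝ (Fin 2))
    (hsep : ∀ i j : Fin 4, i ≠ j → d ≤ dist (p i) (p j)) :
    (Finset.univ.filter fun q : Fin 4 × Fin 4 =>
        q.1 < q.2 ∧ dist (p q.1) (p q.2) = d).card ≤ 5 := by
  by_contra hcon
  have hsub : (Finset.univ.filter fun q : Fin 4 × Fin 4 =>
        q.1 < q.2 ∧ dist (p q.1) (p q.2) = d) ⊆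
      (Finset.univ.filter fun q : Fin 4 × Fin 4 => q.1 < q.2) := by
    intro q hq
    simp only [Finset.mem_filter] at hq ⊢
    exact ⟨hq.1, hq.2.1⟩
  have hcard : (Finset.univ.filter fun q : Fin 4 × Fin 4 => q.1 < q.2).card = 6 := by decide
  have heq := Finset.eq_of_subset_of_card_le hsub (by omega)
  have H : ∀ i j : Fin 4, i < j →
      (p i 0 - p j 0) ^ 2 + (p i 1 - p j 1) ^ 2 = d ^ 2 := by
    intro i j hij
    have hm : (i, j) ∈ (Finset.univ.filter fun q : Fin 4 × Fin 4 => q.1 < q.2) := by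
      simpa using hij
    rw [← heq] at hm
    have h := (Finset.mem_filter.mp hm).2.2
    simp only at h
    rw [← h, EuclideanSpace.dist_sq_eq, Fin.sum_univ_two, Real.dist_eq, Real.dist_eq,
      sq_abs, sq_abs]
  have h01 := H 0 1 (by decide)
  have h02 := H 0 2 (by decide)
  have h03 := H 0 3 (by decide)
  have h12 := H 1 2 (by decide)
  have h13 := H 1 3 (by decide)
  have h23 := H 2 3 (by decide)
  exact gram_aux (d ^ 2) (p 0 0 - p 1 0) (p 0 1 - p 1 1) (p 0 0 - p 2 0) (p 0 1 - p 2 1)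
    (p 0 0 - p 3 0) (p 0 1 - p 3 1) (by positivity) h01 h02 h03
    (by linarith) (by linarith) (by linarith)
end

section
/- Let d > 0 and let p₁, p₂, p₃, p₄ be four points in the Euclidean plane ℝ² whose pairwise distances are all at least d, such that exactly 5 of the 6 unordered pairs are at distance exactly d. Then, after relabeling the points, dist(p₁,p₂) = dist(p₁,p₃) = dist(p₂,p₃) = dist(p₂,p₄) = dist(p₃,p₄) = d and dist(p₁,p₄) = √3·d; that is, the four points are the vertices of a rhombus of side d formed by two equilateral triangles of side d sharing an edge. -/
/-- Planar core in coordinates. -/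
lemma rhombus_alg (D a1 a2 c1 c2 x1 x2 : ℝ) (hD : 0 < D)
    (ha : a1 ^ 2 + a2 ^ 2 = D) (hc : c1 ^ 2 + c2 ^ 2 = D)
    (hac : (a1 - c1) ^ 2 + (a2 - c2) ^ 2 = D)
    (hx : x1 ^ 2 + x2 ^ 2 = D) (hxc : (c1 - x1) ^ 2 + (c2 - x2) ^ 2 = D)
    (hne : 0 < (a1 - x1) ^ 2 + (a2 - x2) ^ 2) :
    (a1 - x1) ^ 2 + (a2 - x2) ^ 2 = 3 * D := by
  have h1 : (a1 - x1) * c1 + (a2 - x2) * c2 = 0 := by nlinarith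
  have h2 : (a1 + x1 - c1) * c1 + (a2 + x2 - c2) * c2 = 0 := by nlinarith
  have h3 : (a1 - x1) * (a1 + x1 - c1) + (a2 - x2) * (a2 + x2 - c2) = 0 := by nlinarith
  have hcr : (c1 * (a2 - x2) - c2 * (a1 - x1)) ≠ 0 := by
    intro h
    have h5 : (c1 ^ 2 + c2 ^ 2) * ((a1 - x1) ^ 2 + (a2 - x2) ^ 2) = 0 := by
      linear_combination (c1 * (a2 - x2) - c2 * (a1 - x1)) * h +
        ((a1 - x1) * c1 + (a2 - x2) * c2) * h1
    rw [hc] at h5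
    exact (mul_pos hD hne).ne' h5
  have w1 : a1 + x1 - c1 = 0 := by
    apply (mul_eq_zero.mp _).resolve_left hcr
    linear_combination (a2 - x2) * h2 - c2 * h3
  have w2 : a2 + x2 - c2 = 0 := by
    apply (mul_eq_zero.mp _).resolve_left hcr
    linear_combination c1 * h3 - (a1 - x1) * h2
  have e1 : c1 = a1 + x1 := by linarith
  have e2 : c2 = a2 + x2 := by linarith
  subst e1 e2
  linarith

lemma dist_plane_sq (x y : EuclideanSpace ℝ (Fin 2)) :
    dist x y ^ 2 = (x 0 - y 0) ^ 2 + (x 1 - y 1) ^ 2 := by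
  rw [EuclideanSpace.dist_eq, Real.sq_sqrt (by positivity)]
  simp [Fin.sum_univ_two, Real.dist_eq, sq_abs]

lemma rhombus_dist (d : ℝ) (hd : 0 < d) (A B C X : EuclideanSpace ℝ (Fin 2))
    (hAB : dist A B = d) (hAC : dist A C = d) (hBC : dist B C = d)
    (hBX : dist B X = d) (hCX : dist C X = d) (hAX : d ≤ dist A X) :
    dist A X = Real.sqrt 3 * d := by
  have key := rhombus_alg (d ^ 2) (A 0 - B 0) (A 1 - B 1) (C 0 - B 0) (C 1 - B 1)
    (X 0 - B 0) (X 1 - B 1) (by positivity)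
    (by rw [← hAB, dist_plane_sq]) (by rw [← hBC, dist_plane_sq]; ring)
    (by rw [← hAC, dist_plane_sq]; ring) (by rw [← hBX, dist_plane_sq]; ring)
    (by rw [← hCX, dist_plane_sq]; ring)
    (by
      have h : 0 < dist A X ^ 2 := by have := hd.trans_le hAX; positivity
      rw [dist_plane_sq] at h
      ring_nf at h ⊢
      exact h)
  have h2 : dist A X ^ 2 = (Real.sqrt 3 * d) ^ 2 := by
    rw [dist_plane_sq, mul_pow, Real.sq_sqrt (by norm_num), ← key]; ring
  exact (sq_eq_sq₀ dist_nonneg (by positivity)).mp h2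

/-- Rigidity: if four points in the plane have pairwise distances at least `d > 0`
and exactly 5 of the 6 unordered pairs are at distance exactly `d`, then after a
relabeling the points form a rhombus of side `d` made of two equilateral triangles
of side `d` sharing an edge, the remaining pair being at distance `√3 · d`. -/
theorem four_points_five_tangencies_rigidity
    (d : ℝ) (hd : 0 < d) (p : Fin 4 → EuclideanSpace ℝ (Fin 2))
    (hsep : ∀ i j : Fin 4, i ≠ j → d ≤ dist (p i) (p j))
    (hfive : (Finset.univ.filter fun q : Fin 4 × Fin 4 =>
        q.1 < q.2 ∧ dist (p q.1) (p q.2) = d).card = 5) :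
    ∃ σ : Equiv.Perm (Fin 4),
      dist (p (σ 0)) (p (σ 1)) = d ∧
      dist (p (σ 0)) (p (σ 2)) = d ∧
      dist (p (σ 1)) (p (σ 2)) = d ∧
      dist (p (σ 1)) (p (σ 3)) = d ∧
      dist (p (σ 2)) (p (σ 3)) = d ∧
      dist (p (σ 0)) (p (σ 3)) = Real.sqrt 3 * d := by
  classical
  set S := Finset.univ.filter fun q : Fin 4 × Fin 4 =>
        q.1 < q.2 ∧ dist (p q.1) (p q.2) = d with hS
  set T := Finset.univ.filter fun q : Fin 4 × Fin 4 => q.1 < q.2 with hT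
  have hTc : T.card = 6 := by rw [hT]; decide
  have hST : S ⊆ T := by
    intro q hq
    simp only [hS, hT, Finset.mem_filter, Finset.mem_univ, true_and] at hq ⊢
    exact hq.1
  have h1 : (T \ S).card = 1 := by
    rw [Finset.card_sdiff_of_subset hST]; omega
  obtain ⟨⟨i, j⟩, hij⟩ := Finset.card_eq_one.mp h1
  have hlt : i < j := by
    have : (i, j) ∈ T \ S := by rw [hij]; simp
    simpa [hT] using (Finset.mem_sdiff.mp this).1
  have main : ∀ a b : Fin 4, a < b → (a, b) ≠ (i, j) → dist (p a) (p b) = d := by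
    intro a b hab hne
    by_contra hcon
    have : (a, b) ∈ T \ S := by simp [hT, hS, hab, hcon]
    rw [hij] at this
    exact hne (Finset.mem_singleton.mp this)
  have main2 : ∀ a b : Fin 4, a ≠ b → (a, b) ≠ (i, j) → (b, a) ≠ (i, j) →
      dist (p a) (p b) = d := by
    intro a b hab h h'
    rcases lt_or_gt_of_ne hab with hl | hl
    · exact main a b hl h
    · rw [dist_comm]; exact main b a hl h'
  have hσ : ∀ i j : Fin 4, i < j → ∃ σ : Equiv.Perm (Fin 4), σ 0 = i ∧ σ 3 = j := by
    decide
  obtain ⟨σ, rfl, rfl⟩ := hσ i j hlt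
  have m : ∀ a b : Fin 4, a ≠ b → (a, b) ≠ (0, 3) → (b, a) ≠ (0, 3) →
      dist (p (σ a)) (p (σ b)) = d := by
    intro a b hab h h'
    apply main2
    · exact σ.injective.ne hab
    · simpa [Prod.ext_iff] using h
    · simpa [Prod.ext_iff] using h'
  have e1 := m 0 1 (by decide) (by decide) (by decide)
  have e2 := m 0 2 (by decide) (by decide) (by decide)
  have e3 := m 1 2 (by decide) (by decide) (by decide)
  have e4 := m 1 3 (by decide) (by decide) (by decide)
  have e5 := m 2 3 (by decide) (by decide) (by decide)
  exact ⟨σ, e1, e2, e3, e4, e5,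
    rhombus_dist d hd _ _ _ _ e1 e2 e3 e4 e5 (hsep _ _ hlt.ne)⟩
end

section
/- Let g ≥ 1 be an integer, let R > 0, set n = 4g + 2, s = 2R·sin(π/n), and r = s·sin(gπ/(2g+1)) (equivalently r = R·sin(2π/n)). For j = 0, …, n−1 let wⱼ = (R·cos(2πj/n), R·sin(2πj/n)) be the vertices of a regular n-gon of circumradius R centered at the origin. Then the 2g+1 closed disks of radius r centered at the even-indexed vertices w₀, w₂, …, w₄g satisfy: (i) any two distinct centers are at distance ≥ 2r, with equality exactly when the indices differ by 2 modulo n; (ii) hence the disks have pairwise disjoint interiors, and consecutive disks are tangent at the midpoint of the segment from w₂ⱼ to w₂ⱼ₊₂; (iii) these 2g+1 tangency points are pairwise distinct and lie in the interior of the convex hull of {w₀, …, w_{n−1}}. -/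
open Real Metric

lemma aux_dist (R : ℝ) (hR : 0 < R) (x y : ℝ) (p q : EuclideanSpace ℝ (Fin 2))
    (hp : p = ![R * Real.cos x, R * Real.sin x])
    (hq : q = ![R * Real.cos y, R * Real.sin y]) :
    dist p q = 2 * R * |Real.sin ((x - y) / 2)| := by
  have hp0 : p 0 = R * Real.cos x := by rw [hp]; rfl
  have hp1 : p 1 = R * Real.sin x := by rw [hp]; rfl
  have hq0 : q 0 = R * Real.cos y := by rw [hq]; rfl
  have hq1 : q 1 = R * Real.sin y := by rw [hq]; rfl
  rw [EuclideanSpace.dist_eq, Fin.sum_univ_two, Real.dist_eq, Real.dist_eq, sq_abs, sq_abs,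
    hp0, hp1, hq0, hq1]
  rw [Real.sqrt_eq_iff_mul_self_eq (by positivity) (by positivity)]
  have h1 : Real.cos x - Real.cos y = -2 * Real.sin ((x + y) / 2) * Real.sin ((x - y) / 2) :=
    Real.cos_sub_cos x y
  have h2 : Real.sin x - Real.sin y = 2 * Real.sin ((x - y) / 2) * Real.cos ((x + y) / 2) :=
    Real.sin_sub_sin x y
  have h3 := Real.sin_sq_add_cos_sq ((x + y) / 2)
  have h4 := abs_mul_abs_self (Real.sin ((x - y) / 2))
  rw [← mul_sub, ← mul_sub, h1, h2]
  linear_combination (-4 * R ^ 2) * h4 + 4 * R ^ 2 * Real.sin ((x - y) / 2) ^ 2 * h3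

lemma aux_sin (N d : ℕ) (hd : 1 ≤ d) (hdN : d + 1 ≤ N) :
    Real.sin (π / N) ≤ Real.sin (π * d / N) ∧
    (Real.sin (π * d / N) = Real.sin (π / N) ↔ d = 1 ∨ d + 1 = N) := by
  have hN : (0 : ℝ) < N := by exact_mod_cast (by omega : 0 < N)
  have hd' : (1 : ℝ) ≤ d := by exact_mod_cast hd
  have hdN' : (d : ℝ) + 1 ≤ N := by exact_mod_cast hdN
  have hpi := Real.pi_pos
  have key : Real.sin (π * d / N) - Real.sin (π / N)
      = 2 * Real.sin (π * (d - 1) / (2 * N)) * Real.cos (π * (d + 1) / (2 * N)) := by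
    rw [Real.sin_sub_sin]
    rw [show (π * d / N - π / N) / 2 = π * ((d : ℝ) - 1) / (2 * N) by field_simp,
      show (π * d / N + π / N) / 2 = π * ((d : ℝ) + 1) / (2 * N) by field_simp]
  have hA0 : 0 ≤ π * ((d : ℝ) - 1) / (2 * N) := by
    apply div_nonneg _ (by positivity)
    exact mul_nonneg hpi.le (by linarith)
  have hA1 : π * ((d : ℝ) - 1) / (2 * N) < π := by
    rw [div_lt_iff₀ (by positivity)]
    exact mul_lt_mul_of_pos_left (by linarith) hpi
  have hB0 : -(π / 2) < π * ((d : ℝ) + 1) / (2 * N) := by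
    have : 0 ≤ π * ((d : ℝ) + 1) / (2 * N) := by positivity
    linarith
  have hB1 : π * ((d : ℝ) + 1) / (2 * N) ≤ π / 2 := by
    rw [div_le_iff₀ (by positivity)]
    have := mul_le_mul_of_nonneg_left hdN' hpi.le
    linarith
  have hs := Real.sin_nonneg_of_nonneg_of_le_pi hA0 hA1.le
  have hc := Real.cos_nonneg_of_neg_pi_div_two_le_of_le hB0.le hB1
  refine ⟨by have := mul_nonneg hs hc; linarith, ?_, ?_⟩
  · intro h
    by_contra! hcon
    obtain ⟨h1, h2⟩ := hcon
    have h1' : (1 : ℝ) < d := by exact_mod_cast (by omega : 1 < d)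
    have h2' : (d : ℝ) + 1 < N := by exact_mod_cast (by omega : d + 1 < N)
    have hs' : 0 < Real.sin (π * (d - 1) / (2 * N)) := by
      apply Real.sin_pos_of_pos_of_lt_pi _ hA1
      apply div_pos _ (by positivity)
      exact mul_pos hpi (by linarith)
    have hc' : 0 < Real.cos (π * (d + 1) / (2 * N)) := by
      apply Real.cos_pos_of_mem_Ioo ⟨hB0, _⟩
      rw [div_lt_iff₀ (by positivity)]
      have := mul_lt_mul_of_pos_left h2' hpi
      linarith
    have := mul_pos hs' hc'
    linarith
  · rintro (h | h)
    · subst h; simp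
    · have : (N : ℝ) = d + 1 := by exact_mod_cast h.symm
      rw [← Real.sin_pi_sub]
      congr 1
      rw [this]
      have : (d : ℝ) + 1 ≠ 0 := by positivity
      field_simp
      ring

lemma aux_zero_mem (R θ : ℝ) (hR : 0 < R) (hθ : 0 < Real.sin θ)
    (S : Set (EuclideanSpace ℝ (Fin 2))) (u v : EuclideanSpace ℝ (Fin 2))
    (hu0 : u 0 = R) (hu1 : u 1 = 0) (hv0 : v 0 = R * Real.cos θ) (hv1 : v 1 = R * Real.sin θ)
    (hu : u ∈ S) (hv : v ∈ S) (hu' : -u ∈ S) (hv' : -v ∈ S) :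
    (0 : EuclideanSpace ℝ (Fin 2)) ∈ interior (convexHull ℝ S) := by
  rw [mem_interior]
  refine ⟨{p | |p 0 * Real.sin θ - p 1 * Real.cos θ| < R * Real.sin θ / 2} ∩
    {p | |p 1| < R * Real.sin θ / 2}, ?_, ?_, ?_⟩
  · rintro p ⟨h1, h2⟩
    simp only [Set.mem_ofPred_eq] at h1 h2
    have hpos : 0 < R * Real.sin θ := by positivity
    set a := (p 0 * Real.sin θ - p 1 * Real.cos θ) / (R * Real.sin θ) with ha
    set b := p 1 / (R * Real.sin θ) with hb
    have ha' : |a| < 1 / 2 := by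
      rw [ha, abs_div, abs_of_pos hpos, div_lt_iff₀ hpos]; linarith
    have hb' : |b| < 1 / 2 := by
      rw [hb, abs_div, abs_of_pos hpos, div_lt_iff₀ hpos]; linarith
    rw [abs_lt] at ha' hb'
    have hp : p = (1 / 2 : ℝ) • ((1 / 2 + a) • u + (1 / 2 - a) • (-u))
        + (1 / 2 : ℝ) • ((1 / 2 + b) • v + (1 / 2 - b) • (-v)) := by
      ext i
      fin_cases i
      · simp [hu0, hv0, ha, hb]
        field_simp
        ring
      · simp [hu1, hv1, hb]
        field_simp
        ring
    have hc := convex_convexHull ℝ S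
    have hsub := subset_convexHull ℝ S
    rw [hp]
    apply hc _ _ (by norm_num) (by norm_num) (by norm_num)
    · exact hc (hsub hu) (hsub hu') (by linarith) (by linarith) (by ring)
    · exact hc (hsub hv) (hsub hv') (by linarith) (by linarith) (by ring)
  · apply IsOpen.inter
    · exact isOpen_lt (by fun_prop) (by fun_prop)
    · exact isOpen_lt (by fun_prop) (by fun_prop)
  · constructor
    · simp; positivity
    · simp; positivity

/-- The packing on a regular `(4g+2)`-gon realizing `2g+1` multi-loops: the `2g+1`
disks of radius `r = s·sin(gπ/(2g+1))` centered at the even-indexed vertices of a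
regular `n`-gon (`n = 4g+2`, side `s = 2R·sin(π/n)`) have pairwise disjoint
interiors, any two centers are at distance `≥ 2r` with equality exactly for
consecutive even vertices, consecutive disks are tangent at the midpoint of the
corresponding short diagonal, and the `2g+1` tangency points are pairwise distinct
and lie in the interior of the polygon. -/
theorem regular_4g_plus_2_gon_packing_2g_plus_1_multiloops
    (g : ℕ) (hg : 1 ≤ g) (R s r : ℝ) (hR : 0 < R) (n : ℕ) (hn : n = 4 * g + 2)
    (hs : s = 2 * R * Real.sin (π / n))
    (hr : r = s * Real.sin (g * π / (2 * g + 1)))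
    (w : ℕ → EuclideanSpace ℝ (Fin 2))
    (hw : ∀ j : ℕ, w j = ![R * Real.cos (2 * π * j / n), R * Real.sin (2 * π * j / n)]) :
    r = R * Real.sin (2 * π / n) ∧
    -- (i) separation of the even-indexed centers, with equality exactly for
    -- indices differing by 2 modulo n
    (∀ j l : ℕ, j < 2 * g + 1 → l < 2 * g + 1 → j ≠ l →
      2 * r ≤ dist (w (2 * j)) (w (2 * l)) ∧
      (dist (w (2 * j)) (w (2 * l)) = 2 * r ↔
        (j + 1) % (2 * g + 1) = l ∨ (l + 1) % (2 * g + 1) = j)) ∧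
    -- (ii) pairwise disjoint interiors, and consecutive disks tangent at midpoints
    (∀ j l : ℕ, j < 2 * g + 1 → l < 2 * g + 1 → j ≠ l →
      Disjoint (interior (closedBall (w (2 * j)) r))
        (interior (closedBall (w (2 * l)) r))) ∧
    (∀ j : ℕ, j < 2 * g + 1 →
      closedBall (w (2 * j)) r ∩ closedBall (w (2 * j + 2)) r
        = {midpoint ℝ (w (2 * j)) (w (2 * j + 2))}) ∧
    -- (iii) the 2g+1 tangency points are pairwise distinct and lie in the interior
    -- of the convex hull of the polygon's vertices
    (∀ j l : ℕ, j < 2 * g + 1 → l < 2 * g + 1 → j ≠ l →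
      midpoint ℝ (w (2 * j)) (w (2 * j + 2)) ≠ midpoint ℝ (w (2 * l)) (w (2 * l + 2))) ∧
    (∀ j : ℕ, j < 2 * g + 1 →
      midpoint ℝ (w (2 * j)) (w (2 * j + 2)) ∈
        interior (convexHull ℝ (w '' {k | k < n}))) := by
  have hpi := Real.pi_pos
  have hnR : (n : ℝ) = 2 * (2 * g + 1) := by rw [hn]; push_cast; ring
  have hNpos : (0 : ℝ) < 2 * g + 1 := by positivity
  have hg' : (1 : ℝ) ≤ g := by exact_mod_cast hg
  have hr1 : r = R * Real.sin (2 * π / n) := by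
    have h1 : (g * π / (2 * g + 1) : ℝ) = π / 2 - π / n := by
      rw [hnR]; field_simp; ring
    rw [hr, hs, h1, Real.sin_pi_div_two_sub, show 2 * π / (n : ℝ) = 2 * (π / n) by ring,
      Real.sin_two_mul]
    ring
  have hr2 : r = R * Real.sin (π / (2 * g + 1 : ℕ)) := by
    rw [hr1, hnR]; push_cast; congr 2; field_simp
  have hrpos : 0 < r := by
    rw [hr2]
    apply mul_pos hR
    apply Real.sin_pos_of_pos_of_lt_pi (by positivity)
    push_cast
    rw [div_lt_iff₀ hNpos]
    nlinarith
  have hdist : ∀ a b : ℕ, dist (w a) (w b) = 2 * R * |Real.sin (π * ((a : ℝ) - b) / n)| := by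
    intro a b
    rw [aux_dist R hR _ _ _ _ (hw a) (hw b)]
    congr 3
    ring
  have hdist2 : ∀ a b d : ℕ, a + 2 * d = b → d ≤ 2 * g + 1 →
      dist (w a) (w b) = 2 * R * Real.sin (π * d / (2 * g + 1 : ℕ)) := by
    intro a b d h hd
    have hd' : (d : ℝ) ≤ 2 * g + 1 := by exact_mod_cast hd
    rw [dist_comm, hdist, ← h, hnR]
    push_cast
    rw [show π * ((a : ℝ) + 2 * d - a) / (2 * (2 * g + 1)) = π * d / (2 * g + 1) by
      field_simp; ring, abs_of_nonneg]
    apply Real.sin_nonneg_of_nonneg_of_le_pi (by positivity)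
    rw [div_le_iff₀ hNpos]
    exact mul_le_mul_of_nonneg_left hd' hpi.le
  have hlt : ∀ j l : ℕ, l < 2 * g + 1 → j < l →
      2 * r ≤ dist (w (2 * j)) (w (2 * l)) ∧
      (dist (w (2 * j)) (w (2 * l)) = 2 * r ↔
        (j + 1) % (2 * g + 1) = l ∨ (l + 1) % (2 * g + 1) = j) := by
    intro j l hl hjl
    obtain ⟨d, rfl⟩ := Nat.exists_eq_add_of_lt hjl
    obtain ⟨h1, h2⟩ := aux_sin (2 * g + 1) (d + 1) (by omega) (by omega)
    rw [hdist2 (2 * j) (2 * (j + d + 1)) (d + 1) (by ring) (by omega), hr2]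
    refine ⟨by nlinarith, ?_⟩
    have e : (2 * R * Real.sin (π * (d + 1 : ℕ) / (2 * g + 1 : ℕ))
        = 2 * (R * Real.sin (π / (2 * g + 1 : ℕ)))) ↔
        Real.sin (π * (d + 1 : ℕ) / (2 * g + 1 : ℕ)) = Real.sin (π / (2 * g + 1 : ℕ)) := by
      rw [← mul_assoc, mul_right_inj' (by positivity)]
    rw [e, h2, Nat.mod_eq_of_lt (by omega : j + 1 < 2 * g + 1)]
    rcases Nat.lt_or_ge (j + d + 1 + 1) (2 * g + 1) with h | h
    · rw [Nat.mod_eq_of_lt h]; omega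
    · rw [show j + d + 1 + 1 = 2 * g + 1 by omega, Nat.mod_self]; omega
  have hi : ∀ j l : ℕ, j < 2 * g + 1 → l < 2 * g + 1 → j ≠ l →
      2 * r ≤ dist (w (2 * j)) (w (2 * l)) ∧
      (dist (w (2 * j)) (w (2 * l)) = 2 * r ↔
        (j + 1) % (2 * g + 1) = l ∨ (l + 1) % (2 * g + 1) = j) := by
    intro j l hj hl hjl
    rcases Nat.lt_or_gt_of_ne hjl with h | h
    · exact hlt j l hl h
    · rw [dist_comm, or_comm]; exact hlt l j hj h
  have hw0 : ∀ k, w k 0 = R * Real.cos (2 * π * k / n) := by intro k; rw [hw]; rfl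
  have hw1 : ∀ k, w k 1 = R * Real.sin (2 * π * k / n) := by intro k; rw [hw]; rfl
  have hmid : ∀ j, midpoint ℝ (w (2 * j)) (w (2 * j + 2))
      = Real.cos (2 * π / n) • w (2 * j + 1) := by
    intro j
    have e1 : 2 * π * (2 * j : ℕ) / (n : ℝ) = 2 * π * (2 * j + 1 : ℕ) / n - 2 * π / n := by
      push_cast; ring
    have e2 : 2 * π * (2 * j + 2 : ℕ) / (n : ℝ) = 2 * π * (2 * j + 1 : ℕ) / n + 2 * π / n := by
      push_cast; ring
    rw [midpoint_eq_smul_add]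
    ext i
    fin_cases i
    · change (⅟2 : ℝ) * (w (2 * j) 0 + w (2 * j + 2) 0) = Real.cos (2 * π / n) * w (2 * j + 1) 0
      rw [hw0, hw0, hw0, e1, e2, Real.cos_sub, Real.cos_add, invOf_eq_inv]
      ring
    · change (⅟2 : ℝ) * (w (2 * j) 1 + w (2 * j + 2) 1) = Real.cos (2 * π / n) * w (2 * j + 1) 1
      rw [hw1, hw1, hw1, e1, e2, Real.sin_sub, Real.sin_add, invOf_eq_inv]
      ring
  have hθ : 2 * π / (n : ℝ) < π / 2 := by
    rw [hnR, div_lt_iff₀ (by positivity)]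
    nlinarith
  have hθ0 : 0 < 2 * π / (n : ℝ) := by rw [hnR]; positivity
  have hcpos : 0 < Real.cos (2 * π / n) :=
    Real.cos_pos_of_mem_Ioo ⟨by linarith, hθ⟩
  have hspos : 0 < Real.sin (2 * π / n) :=
    Real.sin_pos_of_pos_of_lt_pi hθ0 (by linarith)
  have hclt : Real.cos (2 * π / n) < 1 := by
    have := Real.sin_sq_add_cos_sq (2 * π / n)
    nlinarith
  refine ⟨hr1, hi, ?_, ?_, ?_, ?_⟩
  · intro j l hj hl hjl
    rw [interior_closedBall _ hrpos.ne', interior_closedBall _ hrpos.ne']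
    apply ball_disjoint_ball
    linarith [(hi j l hj hl hjl).1]
  · intro j hj
    have hd : dist (w (2 * j)) (w (2 * j + 2)) = 2 * r := by
      rw [hdist2 (2 * j) (2 * j + 2) 1 (by ring) (by omega), hr2]
      push_cast
      rw [mul_one]; ring
    ext x
    simp only [Set.mem_inter_iff, mem_closedBall, Set.mem_singleton_iff]
    constructor
    · rintro ⟨h1, h2⟩
      have h3 := dist_triangle (w (2 * j)) x (w (2 * j + 2))
      rw [dist_comm (w (2 * j)) x] at h3
      apply eq_midpoint_of_dist_eq_half
      · rw [hd, dist_comm]; linarith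
      · rw [hd]; linarith
    · rintro rfl
      rw [dist_midpoint_left, dist_midpoint_right, hd]
      norm_num
      linarith
  · intro j l hj hl hjl h
    rw [hmid, hmid] at h
    have h' := smul_right_injective _ hcpos.ne' h
    have key : ∀ j l : ℕ, l < 2 * g + 1 → j < l → w (2 * j + 1) ≠ w (2 * l + 1) := by
      intro j l hl hjl h
      obtain ⟨d, rfl⟩ := Nat.exists_eq_add_of_lt hjl
      have h1 := hdist2 (2 * j + 1) (2 * (j + d + 1) + 1) (d + 1) (by ring) (by omega)
      have h2 := (aux_sin (2 * g + 1) (d + 1) (by omega) (by omega)).1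
      rw [h, dist_self] at h1
      rw [hr2] at hrpos
      nlinarith
    rcases Nat.lt_or_gt_of_ne hjl with h | h
    · exact key j l hl h h'
    · exact key l j hj h h'.symm
  · intro j hj
    have hneg : ∀ k, w (k + (2 * g + 1)) = - w k := by
      intro k
      have e : 2 * π * (k + (2 * g + 1) : ℕ) / (n : ℝ) = 2 * π * k / n + π := by
        rw [hnR]; push_cast; field_simp
      ext i
      fin_cases i
      · change w (k + (2 * g + 1)) 0 = - w k 0
        rw [hw0, hw0, e, Real.cos_add_pi]; ring
      · change w (k + (2 * g + 1)) 1 = - w k 1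
        rw [hw1, hw1, e, Real.sin_add_pi]; ring
    have hmem : ∀ k, k < n → w k ∈ w '' {k | k < n} := fun k hk => ⟨k, hk, rfl⟩
    have h0 : (0 : EuclideanSpace ℝ (Fin 2)) ∈ interior (convexHull ℝ (w '' {k | k < n})) := by
      apply aux_zero_mem R (2 * π / n) hR hspos _ (w 0) (w 1)
      · rw [hw0]; simp
      · rw [hw1]; simp
      · rw [hw0]; simp
      · rw [hw1]; simp
      · exact hmem _ (by omega)
      · exact hmem _ (by omega)
      · rw [← hneg]; exact hmem _ (by omega)
      · rw [← hneg]; exact hmem _ (by omega)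
    have h1 : w (2 * j + 1) ∈ convexHull ℝ (w '' {k | k < n}) :=
      subset_convexHull ℝ _ (hmem _ (by omega))
    rw [hmid]
    apply (convex_convexHull ℝ (w '' {k | k < n})).openSegment_interior_self_subset_interior h0 h1
    exact ⟨1 - Real.cos (2 * π / n), Real.cos (2 * π / n), by linarith, hcpos, by ring, by simp⟩
end

section
/- Let g ≥ 2 be an integer and R > 0, and set s = 2R·sin(π/(2g)). Identify ℝ² with ℂ, and for j ∈ ℤ let Bⱼ = R·e^{iπj/g} and Cⱼ = Bⱼ + e^{−iπ/3}·(Bⱼ₊₁ − Bⱼ); define A₂ⱼ = Bⱼ and A₂ⱼ₊₁ = Cⱼ, indices modulo 4g. Then: (i) |A_{k+1} − Aₖ| = s for every k (all 4g sides of the 4g-gon have length s); (ii) |A₂ⱼ₊₂ − A₂ⱼ| = s for every j (all 2g sides of the underlying regular 2g-gon have length s); (iii) |Aₖ − Aₗ| ≥ s for all k ≢ l (mod 4g). Consequently, the 4g closed disks of radius s/2 centered at A₀, …, A_{4g−1} have pairwise disjoint interiors, and each of the 4g pairs (Aₖ, A_{k+1}) and each of the 2g pairs (A₂ⱼ, A₂ⱼ₊₂)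 is a tangent pair of disks, giving at least 6g tangencies. -/
open Real Complex Metric

lemma aux_dist_sq (r t x y : ℝ) :
    dist ((r : ℂ) * Complex.exp ((x : ℂ) * Complex.I)) ((t : ℂ) * Complex.exp ((y : ℂ) * Complex.I)) ^ 2
      = r ^ 2 + t ^ 2 - 2 * r * t * Real.cos (x - y) := by
  rw [Complex.dist_eq, Complex.sq_norm, Complex.normSq_apply]
  simp only [Complex.sub_re, Complex.sub_im, Complex.ofReal_re, Complex.ofReal_im, Complex.re_ofReal_mul, Complex.im_ofReal_mul,
    Complex.exp_ofReal_mul_I_re, Complex.exp_ofReal_mul_I_im]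
  rw [Real.cos_sub]
  linear_combination r ^ 2 * Real.sin_sq_add_cos_sq x + t ^ 2 * Real.sin_sq_add_cos_sq y

lemma aux_sin_reduce (g : ℕ) (hg : 2 ≤ g) (a : ℝ) (ha : a = Real.pi / (2 * g)) (m : ℤ) :
    ∃ (r : ℤ) (e : ℝ), 0 ≤ r ∧ r < 2 * g ∧ (2 * g : ℤ) ∣ (m - r) ∧ e ^ 2 = 1 ∧
      ∀ z : ℝ, Real.sin ((m + z) * a) = e * Real.sin ((r + z) * a) := by
  have hg0 : (0 : ℝ) < g := by exact_mod_cast (by omega : 0 < g)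
  refine ⟨m % (2 * g), (-1) ^ (m / (2 * g)), Int.emod_nonneg _ (by omega),
    Int.emod_lt_of_pos _ (by omega), Int.dvd_self_sub_emod, ?_, ?_⟩
  · rcases Int.even_or_odd (m / (2 * g)) with h | h
    · simp [h.neg_one_zpow]
    · simp [h.neg_one_zpow]
  · intro z
    rw [← Real.sin_add_int_mul_pi]
    congr 1
    have h : ((m % (2 * g) + 2 * g * (m / (2 * g)) : ℤ) : ℝ) = m := by
      rw [Int.emod_add_mul_ediv]
    push_cast at h
    have h2 : Real.pi = 2 * g * a := by rw [ha]; field_simp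
    rw [h2]
    linear_combination (-a) * h

lemma aux_sin_mul (g : ℕ) (hg : 2 ≤ g) (a : ℝ) (ha : a = Real.pi / (2 * g)) (m : ℤ) :
    0 ≤ Real.sin (m * a) * Real.sin ((m + 1) * a) := by
  have hg0 : (0 : ℝ) < g := by exact_mod_cast (by omega : 0 < g)
  have h2 : 2 * g * a = Real.pi := by rw [ha]; field_simp
  have ha0 : 0 < a := by rw [ha]; positivity
  obtain ⟨r, e, h0, h1, -, he, h⟩ := aux_sin_reduce g hg a ha m
  have e1 := h 0
  simp only [add_zero] at e1
  rw [e1, h 1]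
  have r0 : (0 : ℝ) ≤ r := by exact_mod_cast h0
  have r1 : (r : ℝ) + 1 ≤ 2 * g := by exact_mod_cast h1
  have s1 : 0 ≤ Real.sin (r * a) := Real.sin_nonneg_of_nonneg_of_le_pi (by positivity) (by nlinarith)
  have s2 : 0 ≤ Real.sin ((r + 1) * a) :=
    Real.sin_nonneg_of_nonneg_of_le_pi (by positivity) (by nlinarith)
  have : e * Real.sin (r * a) * (e * Real.sin ((r + 1) * a))
    = e ^ 2 * (Real.sin (r * a) * Real.sin ((r + 1) * a)) := by ring
  rw [this, he]
  positivity

lemma aux_sin_sq (g : ℕ) (hg : 2 ≤ g) (a : ℝ) (ha : a = Real.pi / (2 * g)) (m : ℤ)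
    (hm : ¬ (2 * g : ℤ) ∣ m) :
    Real.sin a ^ 2 ≤ Real.sin (m * a) ^ 2 := by
  have hg0 : (0 : ℝ) < g := by exact_mod_cast (by omega : 0 < g)
  have h2 : 2 * g * a = Real.pi := by rw [ha]; field_simp
  have ha0 : 0 < a := by rw [ha]; positivity
  obtain ⟨r, e, h0, h1, hd, he, h⟩ := aux_sin_reduce g hg a ha m
  have e1 := h 0
  simp only [add_zero] at e1
  have hr : r ≠ 0 := by
    rintro rfl
    simp at hd
    exact hm hd
  have r0 : (1 : ℝ) ≤ r := by exact_mod_cast (by omega : 1 ≤ r)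
  have r1 : (r : ℝ) + 1 ≤ 2 * g := by exact_mod_cast h1
  have s1 : 0 ≤ Real.sin ((r - 1) * a) :=
    Real.sin_nonneg_of_nonneg_of_le_pi (mul_nonneg (by linarith) ha0.le) (by nlinarith)
  have s2 : 0 ≤ Real.sin ((r + 1) * a) :=
    Real.sin_nonneg_of_nonneg_of_le_pi (by positivity) (by nlinarith)
  have s3 := mul_nonneg s1 s2
  rw [sub_mul, add_mul, one_mul, Real.sin_sub, Real.sin_add] at s3
  rw [e1, mul_pow, he]
  have c1 := Real.sin_sq_add_cos_sq a
  have c2 := Real.sin_sq_add_cos_sq (r * a)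
  have : Real.sin (r * a) ^ 2 - Real.sin a ^ 2 =
     (Real.sin (r * a) * Real.cos a - Real.cos (r * a) * Real.sin a) *
      (Real.sin (r * a) * Real.cos a + Real.cos (r * a) * Real.sin a) := by
    linear_combination (-Real.sin (r * a) ^ 2) * c1 + (Real.sin a ^ 2) * c2
  linarith

lemma aux_tangent (x y : ℂ) (s : ℝ) (h : dist y x = s) :
    (closedBall x (s / 2) ∩ closedBall y (s / 2)).Nonempty := by
  refine ⟨midpoint ℝ x y, ?_, ?_⟩
  · rw [mem_closedBall, dist_midpoint_left, dist_comm x y, h]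
    norm_num
    linarith
  · rw [mem_closedBall, dist_midpoint_right, dist_comm x y, h]
    norm_num
    linarith

/-- The packing realizing `4g` multi-loops on a surface in `H(2g-2)`: on the
`4g`-gon obtained from a regular `2g`-gon of circumradius `R` (side
`s = 2R·sin(π/(2g))`) by erecting an equilateral triangle externally on each side,
all `4g` sides have length `s`, the `2g` sides of the underlying `2g`-gon have
length `s`, all pairs of distinct vertices are at distance `≥ s`, and hence the
`4g` disks of radius `s/2` centered at the vertices have pairwise disjoint
interiors and are tangent along each side of the `4g`-gon and along each side of
the underlying `2g`-gon, giving at least `6g` tangencies. -/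
theorem equilateral_augmented_2g_gon_packing_4g_multiloops
    (g : ℕ) (hg : 2 ≤ g) (R s : ℝ) (hR : 0 < R)
    (hs : s = 2 * R * Real.sin (Real.pi / (2 * g)))
    (B C A : ℤ → ℂ)
    (hB : ∀ j : ℤ, B j = (R : ℂ) * Complex.exp ((Real.pi : ℂ) * (j : ℂ) / (g : ℂ) * Complex.I))
    (hC : ∀ j : ℤ, C j = B j + Complex.exp (-((Real.pi : ℂ) / 3) * Complex.I) * (B (j + 1) - B j))
    (hA : ∀ j : ℤ, A (2 * j) = B j ∧ A (2 * j + 1) = C j) :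
    -- (i) all 4g sides of the 4g-gon have length s
    (∀ k : ℤ, dist (A (k + 1)) (A k) = s) ∧
    -- (ii) all 2g sides of the underlying regular 2g-gon have length s
    (∀ j : ℤ, dist (A (2 * j + 2)) (A (2 * j)) = s) ∧
    -- (iii) distinct vertices (mod 4g) are at distance at least s
    (∀ k l : ℤ, ¬ ((4 * g : ℤ) ∣ (k - l)) → s ≤ dist (A k) (A l)) ∧
    -- consequently: pairwise disjoint interiors of the disks of radius s/2
    (∀ k l : ℤ, ¬ ((4 * g : ℤ) ∣ (k - l)) →
      Disjoint (interior (closedBall (A k) (s / 2))) (interior (closedBall (A l) (s / 2)))) ∧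
    -- and each pair (A k, A (k+1)) and (A (2j), A (2j+2)) is a tangent pair of disks
    (∀ k : ℤ, (closedBall (A k) (s / 2) ∩ closedBall (A (k + 1)) (s / 2)).Nonempty) ∧
    (∀ j : ℤ, (closedBall (A (2 * j)) (s / 2) ∩ closedBall (A (2 * j + 2)) (s / 2)).Nonempty) := by
  have hg0 : (0 : ℝ) < g := by exact_mod_cast (by omega : 0 < g)
  have hg2 : (2 : ℝ) ≤ g := by exact_mod_cast hg
  have hgc : (g : ℂ) ≠ 0 := by exact_mod_cast (by omega : g ≠ 0)
  obtain ⟨a, ha⟩ : ∃ a : ℝ, a = Real.pi / (2 * g) := ⟨_, rfl⟩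
  have h2 : 2 * g * a = Real.pi := by rw [ha]; field_simp
  have ha0 : 0 < a := by rw [ha]; positivity
  have ha1 : a ≤ Real.pi / 4 := by nlinarith
  rw [← ha] at hs
  have hsin : 0 < Real.sin a := Real.sin_pos_of_pos_of_lt_pi ha0 (by linarith)
  have hcos : 0 < Real.cos a := Real.cos_pos_of_mem_Ioo ⟨by linarith, by linarith⟩
  have hs0 : 0 ≤ s := by rw [hs]; positivity
  have h3 : √3 ^ 2 = (3 : ℝ) := Real.sq_sqrt (by norm_num)
  have h3' : 1 ≤ √3 := by rw [Real.one_le_sqrt]; norm_num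
  have c1 := Real.sin_sq_add_cos_sq a
  obtain ⟨ρ, hρ⟩ : ∃ ρ : ℝ, ρ = R * (Real.cos a + √3 * Real.sin a) := ⟨_, rfl⟩
  have hρR : R ≤ ρ := by
    rw [hρ]
    have : 1 ≤ Real.cos a + √3 * Real.sin a := by nlinarith [mul_pos hsin hcos]
    nlinarith
  have hB' : ∀ j : ℤ, B j = (R : ℂ) * Complex.exp (((2 * j * a : ℝ) : ℂ) * Complex.I) := by
    intro j
    rw [hB, ha]
    congr 3
    push_cast
    field_simp
  have hC' : ∀ j : ℤ, C j = (ρ : ℂ) * Complex.exp ((((2 * j + 1) * a : ℝ) : ℂ) * Complex.I) := by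
    intro j
    have e3 : Complex.exp (-((Real.pi : ℂ) / 3) * Complex.I)
        = Complex.exp (((-(Real.pi / 3) : ℝ) : ℂ) * Complex.I) := by push_cast; rfl
    have w1 : (2 * j * a : ℝ) = (2 * j + 1) * a - a := by ring
    have w2 : (2 * ((j + 1 : ℤ) : ℝ) * a : ℝ) = (2 * j + 1) * a + a := by push_cast; ring
    rw [hC, hB', hB', e3, w1, w2, hρ]
    apply Complex.ext
    · simp only [Complex.add_re, Complex.mul_re, Complex.sub_re, Complex.sub_im,
        Complex.ofReal_re, Complex.ofReal_im, Complex.re_ofReal_mul, Complex.im_ofReal_mul,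
        Complex.exp_ofReal_mul_I_re, Complex.exp_ofReal_mul_I_im, Real.cos_add, Real.cos_sub,
        Real.sin_add, Real.sin_sub, Real.cos_neg, Real.sin_neg, Real.cos_pi_div_three,
        Real.sin_pi_div_three]
      ring
    · simp only [Complex.add_im, Complex.mul_im, Complex.sub_re, Complex.sub_im,
        Complex.ofReal_re, Complex.ofReal_im, Complex.re_ofReal_mul, Complex.im_ofReal_mul,
        Complex.exp_ofReal_mul_I_re, Complex.exp_ofReal_mul_I_im, Real.cos_add, Real.cos_sub,
        Real.sin_add, Real.sin_sub, Real.cos_neg, Real.sin_neg, Real.cos_pi_div_three,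
        Real.sin_pi_div_three]
      ring
  have key : ρ ^ 2 + R ^ 2 - 2 * ρ * R * Real.cos a = s ^ 2 := by
    rw [hρ, hs]
    linear_combination (R ^ 2 * Real.sin a ^ 2) * h3 - R ^ 2 * c1
  have dBB : ∀ i j : ℤ, dist (B i) (B j) ^ 2 = 4 * R ^ 2 * Real.sin ((i - j : ℤ) * a) ^ 2 := by
    intro i j
    rw [hB', hB', aux_dist_sq]
    have : (2 * i * a - 2 * j * a : ℝ) = 2 * ((i - j : ℤ) * a) := by push_cast; ring
    rw [this, Real.cos_two_mul, Real.cos_sq']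
    ring
  have dCC : ∀ i j : ℤ, dist (C i) (C j) ^ 2 = 4 * ρ ^ 2 * Real.sin ((i - j : ℤ) * a) ^ 2 := by
    intro i j
    rw [hC', hC', aux_dist_sq]
    have : ((2 * i + 1) * a - (2 * j + 1) * a : ℝ) = 2 * ((i - j : ℤ) * a) := by push_cast; ring
    rw [this, Real.cos_two_mul, Real.cos_sq']
    ring
  have dCB : ∀ i j : ℤ, dist (C i) (B j) ^ 2 = s ^ 2 + 4 * ρ * R *
      (Real.sin ((i - j : ℤ) * a) * Real.sin (((i - j : ℤ) + 1) * a)) := by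
    intro i j
    rw [hC', hB', aux_dist_sq, ← key]
    have w1 : ((2 * i + 1) * a - 2 * j * a : ℝ) = ((i - j : ℤ) * a) + (((i - j : ℤ) + 1) * a) := by
      push_cast; ring
    have w2 : Real.cos a = Real.cos ((((i - j : ℤ) + 1) * a) - ((i - j : ℤ) * a)) := by
      congr 1; ring
    rw [w1, w2, Real.cos_add, Real.cos_sub]
    ring
  have eqs : ∀ x y : ℂ, dist x y ^ 2 = s ^ 2 → dist x y = s := fun x y h =>
    (pow_left_inj₀ dist_nonneg hs0 two_ne_zero).1 h
  have les : ∀ x y : ℂ, s ^ 2 ≤ dist x y ^ 2 → s ≤ dist x y := fun x y h =>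
    (pow_le_pow_iff_left₀ hs0 dist_nonneg two_ne_zero).1 h
  have i1 : ∀ k : ℤ, dist (A (k + 1)) (A k) = s := by
    intro k
    rcases Int.even_or_odd' k with ⟨j, rfl | rfl⟩
    · rw [(hA j).1, (hA j).2]
      apply eqs
      rw [dCB]
      simp
    · have : 2 * j + 1 + 1 = 2 * (j + 1) := by ring
      rw [this, (hA (j + 1)).1, (hA j).2, dist_comm]
      apply eqs
      rw [dCB]
      simp
  have i2 : ∀ j : ℤ, dist (A (2 * j + 2)) (A (2 * j)) = s := by
    intro j
    have : 2 * j + 2 = 2 * (j + 1) := by ring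
    rw [this, (hA (j + 1)).1, (hA j).1]
    apply eqs
    rw [dBB, hs]
    simp
    ring
  have leCB : ∀ i j : ℤ, s ≤ dist (C i) (B j) := by
    intro i j
    apply les
    rw [dCB]
    have := aux_sin_mul g hg a ha (i - j)
    have : 0 ≤ 4 * ρ * R := by nlinarith
    have := mul_nonneg this (aux_sin_mul g hg a ha (i - j))
    linarith
  have i3 : ∀ k l : ℤ, ¬ ((4 * g : ℤ) ∣ (k - l)) → s ≤ dist (A k) (A l) := by
    intro k l hkl
    have hdiv : ∀ i j : ℤ, k - l = 2 * (i - j) → ¬ (2 * g : ℤ) ∣ (i - j) := by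
      rintro i j h ⟨c, hc⟩
      exact hkl ⟨c, by rw [h, hc]; ring⟩
    rcases Int.even_or_odd' k with ⟨i, rfl | rfl⟩ <;> rcases Int.even_or_odd' l with ⟨j, rfl | rfl⟩
    · rw [(hA i).1, (hA j).1]
      apply les
      rw [dBB, hs]
      have := aux_sin_sq g hg a ha _ (hdiv i j (by ring))
      nlinarith [mul_le_mul_of_nonneg_left this (by positivity : 0 ≤ 4 * R ^ 2)]
    · rw [(hA i).1, (hA j).2, dist_comm]
      exact leCB _ _
    · rw [(hA i).2, (hA j).1]
      exact leCB _ _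
    · rw [(hA i).2, (hA j).2]
      apply les
      rw [dCC, hs]
      have := aux_sin_sq g hg a ha _ (hdiv i j (by ring))
      have h5 : R ^ 2 ≤ ρ ^ 2 := by gcongr
      have := mul_le_mul h5 this (by positivity) (by positivity)
      linarith
  refine ⟨i1, i2, i3, ?_, fun k => aux_tangent _ _ _ (i1 k), fun j => aux_tangent _ _ _ (i2 j)⟩
  intro k l hkl
  have hspos : s / 2 ≠ 0 := by rw [hs]; positivity
  rw [interior_closedBall _ hspos, interior_closedBall _ hspos]
  apply ball_disjoint_ball
  linarith [i3 k l hkl]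
end
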